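/- Let α ≤ β ≤ −1 be negative integers and let M = (M_i)_{i≥0} be real parameters with M_i ∉ {0,1}. Then for every n ∈ ℕ the polynomial P̂_n^{α,β;M} has degree exactly n, and its leading coefficient equals (2n+α+β)!·(−α−β−n−1)! / ((−1)^{n+α+β}·2^n·n!) if ⌈(−α−β)/2⌉ ≤ n ≤ −α−β−1, and equals (α+β+n+1)_n / (2^n·n!) otherwise. -/

import Mathlib

open Finset MeasureTheory

noncomputable section ExceptionalHahnJacobi

/-- Pochhammer symbol `(z)_m = z (z+1) ⋯ (z+m-1)`. -/
def poch (z : ℝ) (m : ℕ) : ℝ := ∏ i ∈ Finset.range m, (z + (i : ℝ))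

/-- Pochhammer symbol with integer exponent; `(z)_{-k} = 1 / ((z-1)(z-2)⋯(z-k))`. -/
def pochZ (z : ℝ) (m : ℤ) : ℝ :=
  if 0 ≤ m then poch z m.toNat else 1 / poch (z - ((-m).toNat : ℝ)) (-m).toNat

/-- Generalized binomial coefficient `C(z, k) = z(z-1)⋯(z-k+1)/k!`. -/
def genBinom (z : ℝ) (k : ℕ) : ℝ := (∏ i ∈ Finset.range k, (z - (i : ℝ))) / (k.factorial : ℝ)

/-- `λ^{a,b}(x) = x (x + a + b + 1)`. -/
def lam (a b x : ℝ) : ℝ := x * (x + a + b + 1)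

/-- Hahn polynomial `h_n^{a,b,N}(x)`. -/
def hahn (a b N : ℝ) (n : ℕ) (x : ℝ) : ℝ :=
  ∑ j ∈ Finset.range (n + 1),
    poch (-(n : ℝ)) j * poch (a + b + (n : ℝ) + 1) j * poch (-N + (j : ℝ)) (n - j) *
      poch (a + (j : ℝ) + 1) (n - j) * poch (-x) j / (j.factorial : ℝ)

/-- Dual Hahn polynomial `R_n^{a,b,N}(x)`. -/
def dualHahn (a b N : ℝ) (n : ℕ) (x : ℝ) : ℝ :=
  ∑ j ∈ Finset.range (n + 1),
    poch (-(n : ℝ)) j * poch (-N + (j : ℝ)) (n - j) * poch (a + (j : ℝ) + 1) (n - j) /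
        ((n.factorial : ℝ) * (-1 : ℝ) ^ j * (j.factorial : ℝ)) *
      ∏ i ∈ Finset.range j, (x - (i : ℝ) * (a + b + 1 + (i : ℝ)))

/-- Dual Hahn polynomial with integer degree; zero for negative degree. -/
def dualHahnZ (a b N : ℝ) (m : ℤ) (x : ℝ) : ℝ :=
  if 0 ≤ m then dualHahn a b N m.toNat x else 0

/-- Jacobi polynomial `P_n^{a,b}(x)`. -/
def jacobiP (a b : ℝ) (n : ℕ) (x : ℝ) : ℝ :=
  (2 : ℝ)⁻¹ ^ n * ∑ j ∈ Finset.range (n + 1),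
    genBinom ((n : ℝ) + a) j * genBinom ((n : ℝ) + b) (n - j) * (x - 1) ^ (n - j) * (x + 1) ^ j

/-- The function `φ_u^{α,β,N}(s,x)`, a normalized terminating ₃F₂. -/
def phiH (α β : ℤ) (N : ℝ) (u : ℕ) (s x : ℝ) : ℝ :=
  poch ((α : ℝ) + 1) (max u (-α - β - (u : ℤ) - 1).toNat) *
    poch (-N) (max u (-α - β - (u : ℤ) - 1).toNat) *
    ∑ j ∈ Finset.range (u + 1),
      poch (-(u : ℝ)) j * poch ((u : ℝ) - s + (α : ℝ) + (β : ℝ) + 1) j * poch (-x) j /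
        (poch ((α : ℝ) - s + 1) j * poch (-N) j * (j.factorial : ℝ))

/-- The polynomials `Ĥ_n^{α,β,N;M}(x)`. -/
def Hhat (α β : ℤ) (N : ℝ) (M : ℕ → ℝ) (n : ℕ) (x : ℝ) : ℝ :=
  if ⌈((-α - β : ℤ) : ℚ) / 2⌉ ≤ (n : ℤ) ∧ (n : ℤ) ≤ -α - 1 then
    deriv (fun s => phiH α β N n s x) 0 -
      deriv (fun s => phiH α β N (-α - β - (n : ℤ) - 1).toNat s x) 0
  else if -α ≤ (n : ℤ) ∧ (n : ℤ) ≤ -α - β - 1 then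
    (-1 : ℝ) ^ ((β : ℤ) + (n : ℤ)) * ((β + (n : ℤ)).toNat.factorial : ℝ) *
      (((-α - β - (n : ℤ) - 1).toNat.factorial : ℝ) * poch (-x) (-α).toNat *
          hahn (-(α : ℝ)) (β : ℝ) ((α : ℝ) + N) ((α + (n : ℤ)).toNat) (x + (α : ℝ)) +
        (((α + (n : ℤ)).toNat.factorial : ℝ)) *
            poch (-N - (α : ℝ) - (β : ℝ) - (n : ℝ) - 1) (2 * (n : ℤ) + α + β + 1).toNat /
            (M ((α + (n : ℤ)).toNat) - 1) *
          hahn (α : ℝ) (β : ℝ) N ((-α - β - (n : ℤ) - 1).toNat) x)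
  else hahn (α : ℝ) (β : ℝ) N n x

/-- The function `φ_u^{α,β}(s,x)`, a normalized terminating ₂F₁. -/
def phiJ (α β : ℤ) (u : ℕ) (s x : ℝ) : ℝ :=
  poch ((α : ℝ) + 1) (max u (-α - β - (u : ℤ) - 1).toNat) /
      ((max u.factorial (-α - β - (u : ℤ) - 1).toNat.factorial : ℕ) : ℝ) *
    ∑ j ∈ Finset.range (u + 1),
      poch (-(u : ℝ)) j * poch ((u : ℝ) - s + (α : ℝ) + (β : ℝ) + 1) j /
          (poch ((α : ℝ) - s + 1) j * (j.factorial : ℝ)) * ((1 - x) / 2) ^ j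

/-- The polynomials `P̂_n^{α,β;M}(x)`. -/
def Phat (α β : ℤ) (M : ℕ → ℝ) (n : ℕ) (x : ℝ) : ℝ :=
  if ⌈((-α - β : ℤ) : ℚ) / 2⌉ ≤ (n : ℤ) ∧ (n : ℤ) ≤ -α - 1 then
    deriv (fun s => phiJ α β n s x) 0 -
      deriv (fun s => phiJ α β (-α - β - (n : ℤ) - 1).toNat s x) 0
  else if -α ≤ (n : ℤ) ∧ (n : ℤ) ≤ -α - β - 1 then
    (-1 : ℝ) ^ ((β : ℤ) + (n : ℤ)) *
      ((((n : ℤ) + α).toNat.factorial : ℝ) * (((n : ℤ) + β).toNat.factorial : ℝ) *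
        ((-α - β - (n : ℤ) - 1).toNat.factorial : ℝ)) / (n.factorial : ℝ) *
      ((M ((α + (n : ℤ)).toNat) - 1)⁻¹ * jacobiP (α : ℝ) (β : ℝ) ((-α - β - (n : ℤ) - 1).toNat) x +
        ((1 - x) / 2) ^ (-α).toNat * jacobiP (-(α : ℝ)) (β : ℝ) ((α + (n : ℤ)).toNat) x)
  else jacobiP (α : ℝ) (β : ℝ) n x

/-- `u_F = Σ_{f ∈ F} f - C(n_F + 1, 2)`. -/
def uF (F : Finset ℕ) : ℕ := (∑ f ∈ F, f) - (F.card + 1).choose 2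

/-- `n ∈ σ_F = {u_F, u_F + 1, …} \ {u_F + f : f ∈ F}`. -/
def inSigma (F : Finset ℕ) (n : ℕ) : Prop := uF F ≤ n ∧ n - uF F ∉ F

/-- The `i`-th element of `F` in increasing order. -/
def elemOf (F : Finset ℕ) (i : Fin F.card) : ℕ := ((F.orderIsoOfFin rfl i : {x // x ∈ F}) : ℕ)

/-- The `i`-th element of a finite set of integers, in increasing order. -/
def elemOfZ (S : Finset ℤ) (i : Fin S.card) : ℤ := ((S.orderIsoOfFin rfl i : {x // x ∈ S}) : ℤ)

/-- Exceptional Hahn polynomial `h_n^{α,β,N;M,F}(x)`. -/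
def exHahn (α β : ℤ) (N : ℝ) (M : ℕ → ℝ) (F : Finset ℕ) (n : ℕ) (x : ℝ) : ℝ :=
  Matrix.det (Matrix.of fun i j : Fin (F.card + 1) =>
    Fin.cases (Hhat α β N M (n - uF F) (x + ((j : ℕ) : ℝ)))
      (fun k => Hhat α β N M (elemOf F k) (x + ((j : ℕ) : ℝ))) i)

/-- The polynomial `Ω_{M,F}^{α,β,N}(x)`. -/
def OmegaH (α β : ℤ) (N : ℝ) (M : ℕ → ℝ) (F : Finset ℕ) (x : ℝ) : ℝ :=
  Matrix.det (Matrix.of fun i j : Fin F.card =>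
    Hhat α β N M (elemOf F i) (x + ((j : ℕ) : ℝ)))

/-- The polynomial `Λ_{M,F}^{α,β,N}(x)` (columns `j ∈ {1,…,n_F+1}`, `j ≠ n_F`). -/
def LambdaH (α β : ℤ) (N : ℝ) (M : ℕ → ℝ) (F : Finset ℕ) (x : ℝ) : ℝ :=
  Matrix.det (Matrix.of fun i j : Fin F.card =>
    Hhat α β N M (elemOf F i)
      (x + ((if (j : ℕ) = F.card - 1 then F.card else (j : ℕ) : ℕ) : ℝ)))

/-- Exceptional Jacobi polynomial `P_n^{α,β;M,F}(x)`. -/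
def exJacobi (α β : ℤ) (M : ℕ → ℝ) (F : Finset ℕ) (n : ℕ) (x : ℝ) : ℝ :=
  Matrix.det (Matrix.of fun i j : Fin (F.card + 1) =>
    Fin.cases (iteratedDeriv (j : ℕ) (Phat α β M (n - uF F)) x)
      (fun k => iteratedDeriv (j : ℕ) (Phat α β M (elemOf F k)) x) i)

/-- The polynomial `Ω_{M,F}^{α,β}(x)`. -/
def OmegaJ (α β : ℤ) (M : ℕ → ℝ) (F : Finset ℕ) (x : ℝ) : ℝ :=
  Matrix.det (Matrix.of fun i j : Fin F.card =>
    iteratedDeriv (j : ℕ) (Phat α β M (elemOf F i)) x)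

/-- `F_ext = F \ {-β, …, -α-β-1}`. -/
def Fext (α β : ℤ) (F : Finset ℕ) : Finset ℕ :=
  F.filter fun f : ℕ => ((f : ℤ) < -β ∨ -α - β ≤ (f : ℤ))

/-- Admissibility of the data `α, β, M, F`. -/
def IsAdmissible (α β : ℤ) (M : ℕ → ℝ) (F : Finset ℕ) : Prop :=
  (∀ i : ℕ, (i : ℤ) ≤ -β - 1 → (∀ f ∈ F, (i : ℤ) ≠ -β - (f : ℤ) - 1) →
      Real.sign (M i) =
        Real.sign (∏ f ∈ Fext α β F, (((i : ℝ) - (f : ℝ) - (α : ℝ)) * ((i : ℝ) + (f : ℝ) + (β : ℝ) + 1)))) ∧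
  (∀ x : ℤ, 0 ≤ x → (∃ f ∈ F, x ≤ (f : ℤ) + α + β) →
      0 ≤ ∏ f ∈ F.filter (fun f : ℕ => -α - β ≤ (f : ℤ)), (x - (f : ℤ) - α - β))

/-- `U_{F-} = {f + α + β : f ∈ F, 1 ≤ f ≤ -β-1}`. -/
def UFm (α β : ℤ) (F : Finset ℕ) : Finset ℤ :=
  (F.filter fun f : ℕ => (1 ≤ f ∧ (f : ℤ) ≤ -β - 1)).image fun f : ℕ => (f : ℤ) + α + β

/-- `U_{F+} = {f + α + β : f ∈ F, f ≥ -α-β}`. -/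
def UFp (α β : ℤ) (F : Finset ℕ) : Finset ℤ :=
  (F.filter fun f : ℕ => -α - β ≤ (f : ℤ)).image fun f : ℕ => (f : ℤ) + α + β

/-- `U_F = U_{F-} ∪ U_{F+}`. -/
def UF (α β : ℤ) (F : Finset ℕ) : Finset ℤ := UFm α β F ∪ UFp α β F

/-- The weight of the measure `ω_{α,β,N}^{M,F}` at the point `x`. -/
def wH (α β : ℤ) (N : ℕ) (M : ℕ → ℝ) (F : Finset ℕ) (x : ℕ) : ℝ :=
  genBinom ((α : ℝ) + (F.card : ℝ) + (x : ℝ)) x *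
      genBinom ((β : ℝ) + (N : ℝ) - (x : ℝ)) (N - F.card - x) /
    (OmegaH α β (N : ℝ) M F (x : ℝ) * OmegaH α β (N : ℝ) M F ((x : ℝ) + 1))

/-- The weight `ω_{α,β;M,F}(x)` on `[-1,1]`. -/
def wJ (α β : ℤ) (M : ℕ → ℝ) (F : Finset ℕ) (x : ℝ) : ℝ :=
  (1 - x) ^ (α + (F.card : ℤ)) * (1 + x) ^ (β + (F.card : ℤ)) / (OmegaJ α β M F x) ^ 2

/-- The measure on `[-1,1]` with density `ω_{α,β;M,F}`. -/
def jacobiMeasure (α β : ℤ) (M : ℕ → ℝ) (F : Finset ℕ) : Measure ℝ :=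
  (volume.restrict (Set.Icc (-1 : ℝ) 1)).withDensity fun x => ENNReal.ofReal (wJ α β M F x)

/-- Mass of the dual Hahn measure `ρ_{b,a,N̂}` at `λ^{a,b}(x)`. -/
def rhoMass (a b Nh : ℤ) (x : ℕ) : ℝ :=
  (2 * (x : ℝ) + (a : ℝ) + (b : ℝ) + 1) * poch ((b : ℝ) + 1) x * poch (-(Nh : ℝ)) x *
      (Nh.toNat.factorial : ℝ) /
    ((-1 : ℝ) ^ x * poch ((x : ℝ) + (a : ℝ) + (b : ℝ) + 1) (Nh + 1).toNat *
      poch ((a : ℝ) + 1) x * (x.factorial : ℝ))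

/-- Mass of the measure `ν_{a,b,N̂}^{M}` at `λ^{a,b}(s)`. -/
def nuMass (a b Nh : ℤ) (M : ℕ → ℝ) (s : ℤ) : ℝ :=
  if -b ≤ s ∧ s ≤ -1 then
    (2 * (s : ℝ) + (a : ℝ) + (b : ℝ) + 1) * poch ((Nh : ℝ) + 1 - (s : ℝ)) (s + b).toNat /
        poch ((Nh : ℝ) + (b : ℝ) + 1) (s + a + 1).toNat * M ((s + b).toNat)
  else if 0 ≤ s ∧ s ≤ Nh then
    poch ((Nh : ℝ) + 1) b.toNat ^ 2 / poch ((b : ℝ) + 1) (a - b).toNat * rhoMass a b Nh s.toNat /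
      ∏ i ∈ Finset.range b.toNat, (((s : ℝ) + (a : ℝ) + (i : ℝ) + 1) * ((s : ℝ) + (b : ℝ) - (i : ℝ)))
  else 0

/-- `ζ_v` (defined for any integer `v` via `pochZ`). -/
def zetaH (α β : ℤ) (N : ℝ) (v : ℤ) : ℝ :=
  pochZ (-N - (α : ℝ) - (β : ℝ)) v * poch ((v : ℝ) + 1) (-α).toNat *
    ((v - α - β).toNat.factorial : ℝ)

/-- `θ_v^M`. -/
def thetaM (β : ℤ) (M : ℕ → ℝ) (v : ℕ) : ℝ :=
  if (v : ℤ) ≤ -β - 1 then 1 - M ((-β - 1 - (v : ℤ)).toNat) else 1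

/-- `τ_v = ∏_{u ∈ U_F} (λ^{a,b}(v+α+β) - λ^{a,b}(u))` with `a = -α`, `b = -β`. -/
def tauH (α β : ℤ) (F : Finset ℕ) (v : ℕ) : ℝ :=
  ∏ u ∈ UF α β F,
    (lam ((-α : ℤ) : ℝ) ((-β : ℤ) : ℝ) ((v : ℝ) + (α : ℝ) + (β : ℝ)) -
      lam ((-α : ℤ) : ℝ) ((-β : ℤ) : ℝ) ((u : ℤ) : ℝ))

/-- `ξ_n`. -/
def xiH (α β : ℤ) (N : ℝ) (F : Finset ℕ) (n : ℕ) : ℝ :=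
  pochZ (N - (n : ℝ) + 1) ((n : ℤ) + α + β) ^ (α + (F.card : ℤ) + 1) *
    ∏ j ∈ Finset.range (F.card + 1), poch (N - (n : ℝ) - (j : ℝ) + 1) j

/-- `κ_M`. -/
def kappaM (α β : ℤ) (N : ℝ) (M : ℕ → ℝ) (F : Finset ℕ) : ℝ :=
  (∏ u ∈ UFm α β F, (1 - M ((-u + α - 1).toNat))) * ∏ u ∈ UF α β F, zetaH α β N u

/-- Entry `(i,j)` (0-based) of the determinant defining `q_n^{a,b,N̂;M,U_F}`. -/
def qEntry (α β : ℤ) (N : ℝ) (M : ℕ → ℝ) (F : Finset ℕ) (n : ℕ) (x : ℝ) (i j : ℕ) : ℝ :=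
  if i = 0 then
    (-1 : ℝ) ^ j * dualHahnZ (((-α).toNat : ℝ)) (((-β).toNat : ℝ)) (N + (α : ℝ) + (β : ℝ))
      ((n : ℤ) - (-α).toNat + j) x
  else if h1 : i - 1 < (UFm α β F).card then
    (-1 : ℝ) ^ j * dualHahnZ (((-α).toNat : ℝ)) (((-β).toNat : ℝ)) (N + (α : ℝ) + (β : ℝ))
      ((n : ℤ) - (-α).toNat + j)
      (lam (((-α).toNat : ℝ)) (((-β).toNat : ℝ)) ((elemOfZ (UFm α β F) ⟨i - 1, h1⟩ : ℤ) : ℝ))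
  else if i - 1 - (UFm α β F).card < (-α).toNat then
    poch (((-α).toNat : ℝ) + ((-β).toNat : ℝ) + (N + (α : ℝ) + (β : ℝ)) - (n : ℝ) - (j : ℝ) + 1) j *
      Hhat α β (-2 - (N + (α : ℝ) + (β : ℝ))) M ((-β).toNat + (i - 1 - (UFm α β F).card))
        (-(n : ℝ) + ((-α).toNat : ℝ) - (j : ℝ) - 1)
  else if h3 : i - 1 - (UFm α β F).card - (-α).toNat < (UFp α β F).card then
    (-1 : ℝ) ^ j * dualHahnZ (((-α).toNat : ℝ)) (((-β).toNat : ℝ)) (N + (α : ℝ) + (β : ℝ))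
      ((n : ℤ) - (-α).toNat + j)
      (lam (((-α).toNat : ℝ)) (((-β).toNat : ℝ))
        ((elemOfZ (UFp α β F) ⟨i - 1 - (UFm α β F).card - (-α).toNat, h3⟩ : ℤ) : ℝ))
  else 0

/-- The Krall dual Hahn orthogonal polynomial `q_n^{a,b,N̂;M,U_F}(x)`. -/
def qKrall (α β : ℤ) (N : ℝ) (M : ℕ → ℝ) (F : Finset ℕ) (n : ℕ) (x : ℝ) : ℝ :=
  Matrix.det (Matrix.of fun i j : Fin (1 + (UFm α β F).card + (-α).toNat + (UFp α β F).card) =>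
      qEntry α β N M F n x (i : ℕ) (j : ℕ)) /
    ((-1 : ℝ) ^ ((n + (-α).toNat + (-β).toNat) * ((UF α β F).card + 1) +
        ((-α).toNat + (-β).toNat).choose 2 + ((-β).toNat).choose 2 + (-α).toNat) *
      ∏ u ∈ UF α β F, (x - lam (((-α).toNat : ℝ)) (((-β).toNat : ℝ)) ((u : ℤ) : ℝ)))

/-- Row used in the renormalized determinant `P̄`: for `-α ≤ g ≤ -α-β-1` it is
`(M_{α+g} - 1) · P̂_g` written without the division by `M_{α+g} - 1`. -/
def PhatBarRow (α β : ℤ) (M : ℕ → ℝ) (g : ℕ) (x : ℝ) : ℝ :=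
  if -α ≤ (g : ℤ) ∧ (g : ℤ) ≤ -α - β - 1 then
    (-1 : ℝ) ^ ((β : ℤ) + (g : ℤ)) *
      ((((g : ℤ) + α).toNat.factorial : ℝ) * (((g : ℤ) + β).toNat.factorial : ℝ) *
        ((-α - β - (g : ℤ) - 1).toNat.factorial : ℝ)) / (g.factorial : ℝ) *
      (jacobiP (α : ℝ) (β : ℝ) ((-α - β - (g : ℤ) - 1).toNat) x +
        (M ((α + (g : ℤ)).toNat) - 1) * ((1 - x) / 2) ^ (-α).toNat *
          jacobiP (-(α : ℝ)) (β : ℝ) ((α + (g : ℤ)).toNat) x)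
  else Phat α β M g x

/-- The renormalized exceptional Jacobi polynomial
`P̄_n^{α,β;M,F} = (∏_{i=0}^{-β-1} (M_i - 1)) · P_n^{α,β;M,F}`
(written so that the factors `M_i - 1` are distributed into the corresponding rows of the
determinant; this agrees with the product formula whenever all `M_i ≠ 1`). -/
def Pbar (α β : ℤ) (M : ℕ → ℝ) (F : Finset ℕ) (n : ℕ) (x : ℝ) : ℝ :=
  (∏ i ∈ (Finset.range (-β).toNat).filter
      (fun i : ℕ => (((i : ℤ) - α).toNat ∉ F ∧ ((i : ℤ) - α).toNat ≠ n - uF F)), (M i - 1)) *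
    Matrix.det (Matrix.of fun r j : Fin (F.card + 1) =>
      Fin.cases (iteratedDeriv (j : ℕ) (PhatBarRow α β M (n - uF F)) x)
        (fun k => iteratedDeriv (j : ℕ) (PhatBarRow α β M (elemOf F k)) x) r)

end ExceptionalHahnJacobi

open Polynomial in
theorem aux_deg (p : ℝ[X]) (n : ℕ) (c : ℝ) (h1 : p.natDegree ≤ n) (h2 : p.coeff n = c)
    (hc : c ≠ 0) : p.degree = (n : WithBot ℕ) ∧ p.leadingCoeff = c := by
  have h3 : p.natDegree = n := le_antisymm h1 (le_natDegree_of_ne_zero (by rw [h2]; exact hc))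
  have h0 : p ≠ 0 := by rintro rfl; simp at h2; exact hc h2.symm
  exact ⟨by rw [degree_eq_natDegree h0, h3], by rw [leadingCoeff, h3, h2]⟩

theorem genBinom_eq (z : ℝ) (k : ℕ) : genBinom z k = Ring.choose z k := by
  have h := Ring.descPochhammer_eq_factorial_smul_choose z k
  have h2 : ∀ k : ℕ, (descPochhammer ℤ k).smeval z = ∏ i ∈ Finset.range k, (z - (i : ℝ)) := by
    intro k
    rw [← Polynomial.aeval_eq_smeval, Polynomial.aeval_def, ← Polynomial.eval_map,
      descPochhammer_map, descPochhammer_eval_eq_prod_range]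
  rw [h2] at h
  rw [genBinom, h, nsmul_eq_mul]
  field_simp

theorem poch_rev (z : ℝ) (n : ℕ) :
    ∏ i ∈ Finset.range n, (z + n - 1 - (i : ℝ)) = poch z n := by
  rw [poch, ← Finset.prod_range_reflect]
  refine Finset.prod_congr rfl fun i hi => ?_
  have : i + 1 ≤ n := by simpa using hi
  rw [Nat.sub_sub, Nat.cast_sub (by omega)]; push_cast; ring

theorem vander (a b : ℝ) (n : ℕ) :
    ∑ j ∈ Finset.range (n + 1), genBinom ((n : ℝ) + a) j * genBinom ((n : ℝ) + b) (n - j)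
      = poch (a + b + n + 1) n / n.factorial := by
  have h := Ring.add_choose_eq n (Commute.all ((n : ℝ) + a) ((n : ℝ) + b))
  rw [Finset.Nat.sum_antidiagonal_eq_sum_range_succ_mk] at h
  simp only [genBinom_eq]
  rw [← h, ← genBinom_eq, genBinom, ← poch_rev]
  congr 1
  refine Finset.prod_congr rfl fun i _ => ?_
  ring

open Polynomial in
theorem jacobi_poly (a b : ℝ) (n : ℕ) : ∃ p : ℝ[X], (∀ x, jacobiP a b n x = p.eval x) ∧
    p.natDegree ≤ n ∧ p.coeff n = poch (a + b + n + 1) n / (2 ^ n * n.factorial) := by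
  refine ⟨C ((2 : ℝ)⁻¹ ^ n) * ∑ j ∈ Finset.range (n + 1),
    C (genBinom ((n : ℝ) + a) j * genBinom ((n : ℝ) + b) (n - j)) *
      ((X - C 1) ^ (n - j) * (X + C 1) ^ j), ?_, ?_, ?_⟩
  · intro x
    simp only [jacobiP, eval_mul, eval_C, eval_finsetSum, eval_pow, eval_sub, eval_add, eval_X]
    congr 1
    refine Finset.sum_congr rfl fun j _ => ?_
    ring
  · refine (natDegree_C_mul_le _ _).trans (natDegree_sum_le_of_forall_le _ _ fun j hj => ?_)
    refine (natDegree_C_mul_le _ _).trans ?_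
    have hj' : j ≤ n := by simp at hj; omega
    refine natDegree_mul_le.trans ?_
    rw [natDegree_pow, natDegree_pow, natDegree_X_sub_C, natDegree_X_add_C]
    omega
  · rw [coeff_C_mul, finsetSum_coeff]
    have : ∀ j ∈ Finset.range (n + 1), (C (genBinom ((n : ℝ) + a) j * genBinom ((n : ℝ) + b) (n - j)) *
      ((X - C 1) ^ (n - j) * (X + C 1) ^ j) : ℝ[X]).coeff n
        = genBinom ((n : ℝ) + a) j * genBinom ((n : ℝ) + b) (n - j) := by
      intro j hj
      have hj' : j ≤ n := by simp at hj; omega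
      have hm : ((X - C 1) ^ (n - j) * (X + C 1) ^ j : ℝ[X]).Monic :=
        ((monic_X_sub_C 1).pow _).mul ((monic_X_add_C 1).pow _)
      have hd : ((X - C 1) ^ (n - j) * (X + C 1) ^ j : ℝ[X]).natDegree = n := by
        rw [((monic_X_sub_C 1).pow _).natDegree_mul ((monic_X_add_C 1).pow _)]
        rw [natDegree_pow, natDegree_pow, natDegree_X_sub_C, natDegree_X_add_C]
        omega
      have hc := hm.coeff_natDegree
      rw [hd] at hc
      rw [coeff_C_mul, hc, mul_one]
    rw [Finset.sum_congr rfl this, vander, inv_pow]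
    field_simp

theorem poch_add (z : ℝ) (m k : ℕ) : poch z (m + k) = poch z m * poch (z + m) k := by
  simp only [poch, Finset.prod_range_add]
  congr 1
  refine Finset.prod_congr rfl fun i _ => ?_
  push_cast; ring

theorem poch_nat (k m : ℕ) : poch ((k : ℝ) + 1) m * k.factorial = (k + m).factorial := by
  induction m with
  | zero => simp [poch]
  | succ m ih =>
    have : poch ((k : ℝ) + 1) (m + 1) = poch ((k : ℝ) + 1) m * (k + 1 + m) := by
      simp [poch, Finset.prod_range_succ]
    rw [this, ← add_assoc, Nat.factorial_succ]
    push_cast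
    rw [← ih]; ring

theorem poch_one (w : ℕ) : poch 1 w = w.factorial := by
  have := poch_nat 0 w
  simpa using this

theorem poch_neg_self (v : ℕ) : poch (-(v : ℝ)) v = (-1) ^ v * v.factorial := by
  rw [← poch_rev, ← poch_one, poch]
  rw [← Finset.card_range v, ← Finset.prod_const, Finset.card_range, ← Finset.prod_mul_distrib]
  refine Finset.prod_congr rfl fun i _ => ?_
  ring

theorem poch_diff (c : ℝ) (m : ℕ) : Differentiable ℝ (fun s : ℝ => poch (c - s) m) := by
  unfold poch; fun_prop

theorem poch_ne (a m : ℕ) (h : m < a) : poch ((-(a : ℝ)) + 1) m ≠ 0 := by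
  rw [poch, Finset.prod_ne_zero_iff]
  intro i hi
  have : i < m := by simpa using hi
  have : ((i + 1 : ℕ) : ℝ) < a := by exact_mod_cast (by omega)
  push_cast at this
  linarith

/-- coefficient function -/
noncomputable def cf (K : ℝ) (a b u j : ℕ) (s : ℝ) : ℝ :=
  K * (poch (-(u : ℝ)) j * poch ((u : ℝ) + -(a : ℝ) + -(b : ℝ) + 1 - s) j /
          (poch (-(a : ℝ) + 1 - s) j * (j.factorial : ℝ)))

theorem cf_diff (K : ℝ) (a b u j : ℕ) (h : j < a) : DifferentiableAt ℝ (cf K a b u j) 0 := by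
  unfold cf
  have h1 := poch_diff ((u : ℝ) + -(a : ℝ) + -(b : ℝ) + 1) j 0
  have h2 := poch_diff (-(a : ℝ) + 1) j 0
  have h3 := poch_ne a j h
  refine (DifferentiableAt.div (h1.const_mul _) (h2.mul_const _) ?_).const_mul _
  simp only [sub_zero]
  exact mul_ne_zero h3 (by positivity)

open Polynomial in
theorem phi_poly (K : ℝ) (a b u : ℕ) (h : u < a) : ∃ p : ℝ[X],
    (∀ x, deriv (fun s => K * ∑ j ∈ Finset.range (u + 1),
      poch (-(u : ℝ)) j * poch ((u : ℝ) - s + -(a : ℝ) + -(b : ℝ) + 1) j /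
          (poch (-(a : ℝ) - s + 1) j * (j.factorial : ℝ)) * ((1 - x) / 2) ^ j) 0 = p.eval x) ∧
    p.natDegree ≤ u ∧ p.coeff u = deriv (cf K a b u u) 0 * (-1 / 2) ^ u := by
  refine ⟨∑ j ∈ Finset.range (u + 1), C (deriv (cf K a b u j) 0) * (C (-1 / 2) * X + C (1 / 2)) ^ j,
    ?_, ?_, ?_⟩
  · intro x
    have : (fun s => K * ∑ j ∈ Finset.range (u + 1),
      poch (-(u : ℝ)) j * poch ((u : ℝ) - s + -(a : ℝ) + -(b : ℝ) + 1) j /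
          (poch (-(a : ℝ) - s + 1) j * (j.factorial : ℝ)) * ((1 - x) / 2) ^ j)
        = fun s => ∑ j ∈ Finset.range (u + 1), cf K a b u j s * ((1 - x) / 2) ^ j := by
      funext s
      rw [Finset.mul_sum]
      refine Finset.sum_congr rfl fun j _ => ?_
      rw [cf, show (u : ℝ) - s + -(a : ℝ) + -(b : ℝ) + 1 = (u : ℝ) + -(a : ℝ) + -(b : ℝ) + 1 - s by ring,
        show -(a : ℝ) - s + 1 = -(a : ℝ) + 1 - s by ring]
      ring
    have hd : ∀ j ∈ Finset.range (u + 1), DifferentiableAt ℝ (cf K a b u j) 0 := by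
      intro j hj
      apply cf_diff
      simp at hj; omega
    rw [this, deriv_fun_sum fun j hj => (hd j hj).mul_const _, eval_finsetSum]
    refine Finset.sum_congr rfl fun j hj => ?_
    rw [deriv_mul_const (hd j hj)]
    simp only [eval_mul, eval_C, eval_pow, eval_add, eval_X]
    congr 2; ring
  · refine natDegree_sum_le_of_forall_le _ _ fun j hj => ?_
    refine (natDegree_C_mul_le _ _).trans ?_
    have hj' : j ≤ u := by simp at hj; omega
    refine natDegree_pow_le.trans ?_
    have := natDegree_linear_le (a := (-1 / 2 : ℝ)) (b := 1 / 2)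
    nlinarith
  · have hl : ∀ j, ((C (-1 / 2) * X + C (1 / 2)) ^ j : ℝ[X]).natDegree ≤ j := by
      intro j
      refine natDegree_pow_le.trans ?_
      have := natDegree_linear_le (a := (-1 / 2 : ℝ)) (b := 1 / 2)
      nlinarith
    rw [finsetSum_coeff, Finset.sum_range_succ, Finset.sum_eq_zero, zero_add, coeff_C_mul]
    · congr 1
      have := coeff_pow_of_natDegree_le (p := (C (-1 / 2) * X + C (1 / 2) : ℝ[X])) (n := 1) (m := u)
        natDegree_linear_le
      rw [mul_one] at this
      rw [this]
      congr 1
      simp [coeff_C]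
    · intro j hj
      rw [coeff_C_mul, coeff_eq_zero_of_natDegree_lt, mul_zero]
      exact (hl j).trans_lt (by simpa using hj)

theorem cf_deriv (a b n v w : ℕ) (hn : n = v + 1 + w) (hv : n + v + 1 = a + b) (h : n < a) :
    deriv (cf (poch (-(a : ℝ) + 1) n / n.factorial) a b n n) 0 * (-1 / 2) ^ n
      = (-1) ^ (v + 1) * (v.factorial * w.factorial) / (2 ^ n * n.factorial) := by
  set G : ℝ → ℝ := fun s => (poch (-(a : ℝ) + 1) n / n.factorial) *
    (poch (-(n : ℝ)) n * (-1 * (poch (-(v : ℝ) - s) v * poch (1 - s) w)) /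
          (poch (-(a : ℝ) + 1 - s) n * (n.factorial : ℝ))) with hG
  have h3 := poch_ne a n h
  have hc : cf (poch (-(a : ℝ) + 1) n / n.factorial) a b n n = fun s => s * G s := by
    funext s
    have h1 : (n : ℝ) + -(a : ℝ) + -(b : ℝ) + 1 - s = -(v : ℝ) - s := by
      have : ((n + v + 1 : ℕ) : ℝ) = (a + b : ℕ) := by rw [hv]
      push_cast at this; linarith
    have h2 : poch (-(v : ℝ) - s) n = poch (-(v : ℝ) - s) v * (-s) * poch (1 - s) w := by
      rw [hn, poch_add, poch_add]
      congr 2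
      · simp [poch]; ring
      · push_cast; ring
    rw [cf, h1, h2, hG]; ring
  have hGd : DifferentiableAt ℝ G 0 := by
    have h1 := poch_diff (-(v : ℝ)) v 0
    have h1' := poch_diff 1 w 0
    have h2 := poch_diff (-(a : ℝ) + 1) n 0
    refine (DifferentiableAt.div (((h1.mul h1').const_mul _).const_mul _) (h2.mul_const _) ?_).const_mul _
    simp only [sub_zero]
    exact mul_ne_zero h3 (by positivity)
  have hder : deriv (fun s => s * G s) 0 = G 0 := by
    have := ((hasDerivAt_id (0 : ℝ)).mul hGd.hasDerivAt).deriv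
    simp only [id, one_mul, zero_mul, add_zero] at this
    exact this
  rw [hc, hder, hG]
  simp only [sub_zero]
  rw [poch_neg_self, poch_neg_self, poch_one, div_pow]
  have e : ((-1 : ℝ) ^ n) * (-1) ^ n = 1 := by rw [← mul_pow]; simp
  field_simp
  rw [pow_succ]
  linear_combination (-(-1 : ℝ) ^ v) * e

theorem poch_ne' (z : ℝ) (m : ℕ) (h : ∀ i < m, z + (i : ℝ) ≠ 0) : poch z m ≠ 0 := by
  rw [poch, Finset.prod_ne_zero_iff]
  intro i hi
  exact h i (by simpa using hi)

/-- degree and leading coefficient of `P̂_n^{α,β;M}`. -/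
theorem Phat_degree_leadingCoeff
    (α β : ℤ) (M : ℕ → ℝ)
    (hαβ : α ≤ β) (hβ : β ≤ -1)
    (hM : ∀ i, M i ≠ 0 ∧ M i ≠ 1)
    (n : ℕ) :
    ∃ p : Polynomial ℝ, (∀ x : ℝ, Phat α β M n x = p.eval x) ∧
      p.degree = (n : WithBot ℕ) ∧
      p.leadingCoeff =
        (if ⌈((-α - β : ℤ) : ℚ) / 2⌉ ≤ (n : ℤ) ∧ (n : ℤ) ≤ -α - β - 1 then
            ((2 * (n : ℤ) + α + β).toNat.factorial : ℝ) *
                ((-α - β - (n : ℤ) - 1).toNat.factorial : ℝ) /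
              ((-1 : ℝ) ^ ((n : ℤ) + α + β) * 2 ^ n * (n.factorial : ℝ))
          else poch ((α : ℝ) + (β : ℝ) + (n : ℝ) + 1) n / (2 ^ n * (n.factorial : ℝ))) := by
  obtain ⟨a, rfl⟩ : ∃ a : ℕ, α = -(a : ℤ) := ⟨(-α).toNat, by omega⟩
  obtain ⟨b, rfl⟩ : ∃ b : ℕ, β = -(b : ℤ) := ⟨(-β).toNat, by omega⟩
  have hceil : ∀ m : ℤ, ⌈((-(-(a : ℤ)) - -(b : ℤ) : ℤ) : ℚ) / 2⌉ ≤ m ↔ (a : ℤ) + b ≤ 2 * m := by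
    intro m
    rw [Int.ceil_le, div_le_iff₀ (by norm_num)]
    constructor
    · intro h
      have : (-(-(a : ℤ)) - -(b : ℤ) : ℤ) ≤ m * 2 := by exact_mod_cast h
      omega
    · intro h
      have : (-(-(a : ℤ)) - -(b : ℤ) : ℤ) ≤ m * 2 := by omega
      exact_mod_cast this
  by_cases hA : (a : ℤ) + b ≤ 2 * (n : ℤ) ∧ (n : ℤ) ≤ -(-(a : ℤ)) - 1
  · obtain ⟨v, hv⟩ : ∃ v : ℕ, n + v + 1 = a + b := ⟨a + b - n - 1, by omega⟩
    obtain ⟨w, hw⟩ : ∃ w : ℕ, n = v + 1 + w := ⟨n - v - 1, by omega⟩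
    have e1 : (-(-(a : ℤ)) - -(b : ℤ) - (n : ℤ) - 1).toNat = v := by omega
    have e2 : (-(-(a : ℤ)) - -(b : ℤ) - (v : ℤ) - 1).toNat = n := by omega
    have e3 : (2 * (n : ℤ) + -(a : ℤ) + -(b : ℤ)).toNat = w := by omega
    have e4 : (n : ℤ) + -(a : ℤ) + -(b : ℤ) = -((v + 1 : ℕ) : ℤ) := by push_cast; omega
    have m1 : max n v = n := by omega
    have m3 : max n.factorial v.factorial = n.factorial := max_eq_left (Nat.factorial_le (by omega))
    obtain ⟨p, hp1, hp2, hp3⟩ := phi_poly (poch (-(a : ℝ) + 1) n / n.factorial) a b n (by omega)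
    obtain ⟨q, hq1, hq2, hq3⟩ := phi_poly (poch (-(a : ℝ) + 1) n / n.factorial) a b v (by omega)
    rw [cf_deriv a b n v w hw hv (by omega)] at hp3
    refine ⟨p - q, ?_, ?_⟩
    · intro x
      rw [Phat, if_pos (by rw [hceil]; exact hA), e1]
      unfold phiJ
      rw [e1, e2, max_comm v n, max_comm v.factorial, m1, m3]
      push_cast
      rw [hp1, hq1, Polynomial.eval_sub]
    · refine aux_deg _ _ _ ?_ ?_ ?_
      · exact (Polynomial.natDegree_sub_le _ _).trans (by omega)
      · rw [Polynomial.coeff_sub, hp3, Polynomial.coeff_eq_zero_of_natDegree_lt (by omega : q.natDegree < n),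
          if_pos (by rw [hceil]; omega), e1, e3, e4, zpow_neg, zpow_natCast]
        have e : ((-1 : ℝ) ^ (v + 1)) ≠ 0 := by simp
        field_simp
        ring
      · rw [if_pos (by rw [hceil]; omega), e4]
        refine div_ne_zero (by positivity) (mul_ne_zero (mul_ne_zero (zpow_ne_zero _ (by norm_num)) (by positivity)) (by positivity))
  · by_cases hB : -(-(a : ℤ)) ≤ (n : ℤ) ∧ (n : ℤ) ≤ -(-(a : ℤ)) - -(b : ℤ) - 1
    · obtain ⟨v, hv⟩ : ∃ v : ℕ, n + v + 1 = a + b := ⟨a + b - n - 1, by omega⟩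
      obtain ⟨k, hk⟩ : ∃ k : ℕ, n = a + k := ⟨n - a, by omega⟩
      obtain ⟨l, hl⟩ : ∃ l : ℕ, n = b + l := ⟨n - b, by omega⟩
      have e1 : (-(-(a : ℤ)) - -(b : ℤ) - (n : ℤ) - 1).toNat = v := by omega
      have e2 : (2 * (n : ℤ) + -(a : ℤ) + -(b : ℤ)).toNat = l + k := by omega
      have e3 : ((n : ℤ) + -(a : ℤ)).toNat = k := by omega
      have e3' : (-(a : ℤ) + (n : ℤ)).toNat = k := by omega
      have e4 : ((n : ℤ) + -(b : ℤ)).toNat = l := by omega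
      have e5 : (-(-(a : ℤ))).toNat = a := by omega
      have e6 : (n : ℤ) + -(a : ℤ) + -(b : ℤ) = (l : ℤ) - (a : ℤ) := by omega
      have e7 : -(b : ℤ) + (n : ℤ) = (l : ℤ) := by omega
      obtain ⟨p, hp1, hp2, hp3⟩ := jacobi_poly (-(a : ℝ)) (-(b : ℝ)) v
      obtain ⟨q, hq1, hq2, hq3⟩ := jacobi_poly (-(-(a : ℝ))) (-(b : ℝ)) k
      have hld : (Polynomial.C (-1 / 2) * Polynomial.X + Polynomial.C (1 / 2) : Polynomial ℝ).natDegree ≤ 1 :=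
        Polynomial.natDegree_linear_le
      have hlp : ((Polynomial.C (-1 / 2) * Polynomial.X + Polynomial.C (1 / 2)) ^ a : Polynomial ℝ).natDegree ≤ a :=
        Polynomial.natDegree_pow_le.trans (by nlinarith)
      have hlc : ((Polynomial.C (-1 / 2) * Polynomial.X + Polynomial.C (1 / 2)) ^ a : Polynomial ℝ).coeff a
          = (-1 / 2) ^ a := by
        have := Polynomial.coeff_pow_of_natDegree_le (m := a) hld
        rw [mul_one] at this
        rw [this]
        congr 1
        simp [Polynomial.coeff_C]
      refine ⟨Polynomial.C ((-1 : ℝ) ^ l * (k.factorial * l.factorial * v.factorial) / n.factorial) *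
        (Polynomial.C (M k - 1)⁻¹ * p +
          (Polynomial.C (-1 / 2) * Polynomial.X + Polynomial.C (1 / 2)) ^ a * q), ?_, ?_⟩
      · intro x
        rw [Phat, if_neg (by rw [hceil]; exact hA), if_pos hB, e1, e3, e3', e4, e5, e7, zpow_natCast]
        push_cast
        rw [hp1, hq1]
        simp only [Polynomial.eval_mul, Polynomial.eval_C, Polynomial.eval_pow, Polynomial.eval_add,
          Polynomial.eval_X]
        congr 4; ring
      · refine aux_deg _ _ _ ?_ ?_ ?_
        · refine (Polynomial.natDegree_C_mul_le _ _).trans (Polynomial.natDegree_add_le_of_degree_le ?_ ?_)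
          · exact (Polynomial.natDegree_C_mul_le _ _).trans (by omega)
          · exact Polynomial.natDegree_mul_le.trans (by omega)
        · have hm := Polynomial.coeff_mul_add_eq_of_natDegree_le hlp hq2
          rw [Polynomial.coeff_C_mul, Polynomial.coeff_add, Polynomial.coeff_C_mul,
            Polynomial.coeff_eq_zero_of_natDegree_lt (by omega : p.natDegree < n)]
          have hz : -(-(a : ℝ)) + -(b : ℝ) + k + 1 = (l : ℝ) + 1 := by
            have : ((a + k : ℕ) : ℝ) = (b + l : ℕ) := by rw [← hk, ← hl]
            push_cast at this; linarith
          have hf := poch_nat l k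
          rw [hz] at hq3
          rw [if_pos (by rw [hceil]; omega), e1, e2, e6, zpow_sub₀ (by norm_num), zpow_natCast, zpow_natCast]
          have hm' : ((Polynomial.C (-1 / 2) * Polynomial.X + Polynomial.C (1 / 2)) ^ a * q : Polynomial ℝ).coeff n
            = (-1 / 2) ^ a * (poch ((l : ℝ) + 1) k / (2 ^ k * k.factorial)) := by
            rw [hk, hm, hlc, hq3]
          rw [hm', ← hf, div_pow]
          have hp : (2 : ℝ) ^ n = 2 ^ a * 2 ^ k := by rw [hk, pow_add]
          have s1 : ((-1 : ℝ) ^ l) * (-1) ^ l = 1 := by rw [← mul_pow]; simp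
          rw [hp]
          field_simp
          linear_combination (poch ((l : ℝ) + 1) k * (-1) ^ a) * s1
        · rw [if_pos (by rw [hceil]; omega)]
          refine div_ne_zero (by positivity) (mul_ne_zero (mul_ne_zero (zpow_ne_zero _ (by norm_num)) (by positivity)) (by positivity))
    · have hC : ¬ ((a : ℤ) + b ≤ 2 * (n : ℤ) ∧ (n : ℤ) ≤ -(-(a : ℤ)) - -(b : ℤ) - 1) := by omega
      obtain ⟨p, hp1, hp2, hp3⟩ := jacobi_poly (-(a : ℝ)) (-(b : ℝ)) n
      refine ⟨p, ?_, ?_⟩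
      · intro x
        rw [Phat, if_neg (by rw [hceil]; exact hA), if_neg hB]
        push_cast
        exact hp1 x
      · rw [if_neg (by rw [hceil]; exact hC)]
        push_cast
        refine aux_deg _ _ _ hp2 hp3 ?_
        refine div_ne_zero (poch_ne' _ _ fun i hi h0 => ?_) (by positivity)
        have : -(a : ℤ) + -(b : ℤ) + n + 1 + i = 0 := by exact_mod_cast h0
        omega
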